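/- For each ordered pair (x, y) ∈ {(y_2, x_0), (y_0, y_1), (y_0, y_2), (y_0, z_2), (y_0, w_2)} of vertices of the Flower snark J_5, and for every neighbor x' of x, the graph J_5 − y has a right-good 2-factor with respect to x that does not contain the edge xx'. (This is the 2-factor criterion showing that the superedge (J_5)_{x,y} is fully-right for these pairs.) -/

import Mathlib

/-!
After orienting its cycles, a 2-factor of `J_5 - y` is a permutation `σ` of the vertices that fixes
only `y`, moves every other vertex along an edge, and has no 2-cycles: the factor consists of the
edges joining `v` to `σ v`, and its components are the cycles of `σ` (`component_eq`). So each
instance is settled by writing down the cycles.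

The graph `J_5 - y` is Hamiltonian for every `y`, and a Hamiltonian cycle has odd length `19`. For
thirteen of the fifteen triples `(x, y, x')` some Hamiltonian cycle avoids `xx'`. The two remaining
triples, `(y₀, z₂, x₀)` and `(y₀, w₂, x₀)`, admit no such Hamiltonian cycle, but a 13-cycle through
`x` together with a 6-cycle does the job. A certificate is therefore a pair of disjoint cyclic
lists, the second possibly empty; its validity is a finite check.
-/

open SimpleGraph

/-- Vertices of the Flower snark `J_r`: a label in `Fin 4` (`0 ↦ x`, `1 ↦ y`, `2 ↦ z`,
`3 ↦ w`) together with an index in `ZMod r`. -/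
abbrev FlowerVert (r : ℕ) := Fin 4 × ZMod r

/-- The defining edges of the Flower snark `J_r`:
`x_i x_{i+1}`, `x_i y_i`, `y_i z_i`, `y_i w_i`, `z_i w_{i+1}`, `w_i z_{i+1}`. -/
def flowerRel (r : ℕ) : FlowerVert r → FlowerVert r → Prop := fun a b =>
  (a.1 = 0 ∧ b.1 = 0 ∧ b.2 = a.2 + 1) ∨
  (a.1 = 0 ∧ b.1 = 1 ∧ b.2 = a.2) ∨
  (a.1 = 1 ∧ b.1 = 2 ∧ b.2 = a.2) ∨
  (a.1 = 1 ∧ b.1 = 3 ∧ b.2 = a.2) ∨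
  (a.1 = 2 ∧ b.1 = 3 ∧ b.2 = a.2 + 1) ∨
  (a.1 = 3 ∧ b.1 = 2 ∧ b.2 = a.2 + 1)

/-- The Flower snark `J_r`. -/
def flowerSnark (r : ℕ) : SimpleGraph (FlowerVert r) :=
  SimpleGraph.fromRel (flowerRel r)

/-- `F` is a 2-factor of `H − y`, viewed as a subgraph of `H` on the full vertex set:
`F ≤ H`, no edge of `F` is incident to `y`, and every vertex other than `y` has degree
exactly `2` in `F`. -/
def IsTwoFactorOfDelete {V : Type*} (H F : SimpleGraph V) (y : V) : Prop :=
  F ≤ H ∧ (∀ v : V, ¬ F.Adj y v) ∧ ∀ v : V, v ≠ y → (F.neighborSet v).ncard = 2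

/-- A 2-factor `F` of `H − y` is right-good with respect to `x` if the component of `F`
containing `x` is a cycle of odd length and every other component of `F` is a cycle of even
length. -/
def RightGood {V : Type*} (F : SimpleGraph V) (x y : V) : Prop :=
  Odd {u : V | F.Reachable u x}.ncard ∧
  ∀ v : V, v ≠ y → ¬ F.Reachable v x → Even {u : V | F.Reachable u v}.ncard

/-! ### Graphs of permutations -/

section PermGraph

variable {V : Type*}

/-- The graph whose edges join each `v` to `σ v`, when these differ. -/
def permGraph (σ : Equiv.Perm V) : SimpleGraph V :=
  SimpleGraph.fromRel fun a b => σ a = b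

lemma permGraph_adj {σ : Equiv.Perm V} {a b : V} :
    (permGraph σ).Adj a b ↔ a ≠ b ∧ (σ a = b ∨ σ b = a) :=
  SimpleGraph.fromRel_adj _ _ _

lemma permGraph_reachable_apply (σ : Equiv.Perm V) (v : V) :
    (permGraph σ).Reachable v (σ v) := by
  by_cases h : v = σ v
  · rw [← h]
  · exact (permGraph_adj.2 ⟨h, Or.inl rfl⟩).reachable

lemma permGraph_reachable_of_sameCycle {σ : Equiv.Perm V} {u v : V} (h : σ.SameCycle u v) :
    (permGraph σ).Reachable u v := by
  obtain ⟨n, rfl⟩ := h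
  induction n using Int.induction_on with
  | zero => simp
  | succ n ih =>
    rw [add_comm, zpow_add, zpow_one, Equiv.Perm.mul_apply]
    exact ih.trans (permGraph_reachable_apply σ _)
  | pred n ih =>
    refine ih.trans ?_
    have h := permGraph_reachable_apply σ ((σ ^ (-(n : ℤ) - 1)) u)
    rw [← Equiv.Perm.mul_apply, ← zpow_one_add, add_sub_cancel] at h
    exact h.symm

/-- A set permuted cyclically by `σ` is a connected component of `permGraph σ`. -/
lemma component_eq {σ : Equiv.Perm V} {s : Set V} (hs : σ.IsCycleOn s) {v : V} (hv : v ∈ s) :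
    {u : V | (permGraph σ).Reachable u v} = s := by
  ext u
  refine ⟨fun h => ?_, fun h => permGraph_reachable_of_sameCycle (hs.2 h hv)⟩
  obtain ⟨p⟩ := h
  induction p with
  | nil => exact hv
  | cons hadj _ ih =>
    rcases (permGraph_adj.1 hadj).2 with h | h
    · exact hs.apply_mem_iff.1 (h ▸ ih hv)
    · exact h ▸ hs.apply_mem_iff.2 (ih hv)

lemma isTwoFactorOfDelete_permGraph {H : SimpleGraph V} {σ : Equiv.Perm V} {y : V} (hy : σ y = y)
    (hadj : ∀ v, v ≠ y → H.Adj v (σ v)) (h2 : ∀ v, v ≠ y → σ (σ v) ≠ v) :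
    IsTwoFactorOfDelete H (permGraph σ) y := by
  refine ⟨fun a b hab => ?_, fun v hv => ?_, fun v hv => ?_⟩
  · obtain ⟨hne, rfl | rfl⟩ := permGraph_adj.1 hab
    · exact hadj a fun h => hne (by rw [h, hy])
    · exact (hadj b fun h => hne (by rw [h, hy])).symm
  · obtain ⟨hne, h | h⟩ := permGraph_adj.1 hv
    · exact hne (hy ▸ h)
    · exact hne (σ.injective (hy.trans h.symm))
  · have hne : σ v ≠ σ.symm v := fun h => h2 v hv (by rw [h, σ.apply_symm_apply])
    have hset : (permGraph σ).neighborSet v = {σ v, σ.symm v} := by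
      ext u
      simp only [SimpleGraph.mem_neighborSet, permGraph_adj, Set.mem_insert_iff,
        Set.mem_singleton_iff, Equiv.eq_symm_apply, eq_comm (a := u) (b := σ v)]
      refine ⟨And.right, fun h => ⟨?_, h⟩⟩
      rintro rfl
      exact (hadj v hv).ne' (h.elim id id)
    rw [hset, Set.ncard_pair hne]

end PermGraph

/-! ### Certificates by cyclic lists -/

section Lists

variable {V : Type*} [DecidableEq V]

lemma formPerm_commute {c d : List V} (hcd : c.Disjoint d) :
    Commute c.formPerm d.formPerm :=
  Equiv.Perm.Disjoint.commute fun a => by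
    by_cases ha : a ∈ c
    · exact Or.inr (List.formPerm_apply_of_notMem fun h => hcd ha h)
    · exact Or.inl (List.formPerm_apply_of_notMem ha)

/-- Since `d.formPerm` fixes every entry of `c` and commutes with `c.formPerm`, the product still
permutes the entries of `c` cyclically. -/
lemma isCycleOn_formPerm_mul_left {c d : List V} (hc : c.Nodup) (hcd : c.Disjoint d) :
    (c.formPerm * d.formPerm).IsCycleOn {a | a ∈ c} := by
  have hfix : ∀ a ∈ c, d.formPerm a = a := fun a ha =>
    List.formPerm_apply_of_notMem fun h => hcd ha h
  have h := hc.isCycleOn_formPerm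
  refine ⟨h.1.congr fun a ha => ?_, fun a ha b hb => ?_⟩
  · rw [Equiv.Perm.mul_apply, hfix a ha]
  · obtain ⟨n, hn⟩ := h.2 ha hb
    refine ⟨n, ?_⟩
    rw [(formPerm_commute hcd).mul_zpow, Equiv.Perm.mul_apply,
      Equiv.Perm.zpow_apply_eq_self_of_apply_eq_self (hfix a ha), hn]

/-- The finite conditions under which the cyclic lists `c` and `d` describe a right-good 2-factor of
`H - y` with respect to `x` that omits the edge `xx'`: together they list the vertices other than
`y` once each, consecutive entries are adjacent, no cycle has length two, `c` has odd length
and contains `x`, and `d` has even length. -/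
abbrev Certificate (H : SimpleGraph V) (x y x' : V) (c d : List V) : Prop :=
  let σ := c.formPerm * d.formPerm
  (c ++ d).Nodup ∧ (∀ v, v ≠ y ↔ v ∈ c ++ d) ∧
    (∀ v ∈ c ++ d, H.Adj v (σ v) ∧ σ (σ v) ≠ v) ∧
    Odd c.length ∧ Even d.length ∧ x ∈ c ∧ σ x ≠ x' ∧ σ x' ≠ x

lemma ncard_list {l : List V} (h : l.Nodup) : {a | a ∈ l}.ncard = l.length := by
  rw [← List.toFinset_card_of_nodup h, ← Set.ncard_coe_finset, List.coe_toFinset]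

/-- A certificate yields the required 2-factor, namely the graph of the permutation with cycles `c`
and `d`. -/
lemma exists_of_certificate {H : SimpleGraph V} {x y x' : V} (c d : List V)
    (h : Certificate H x y x' c d) :
    ∃ F : SimpleGraph V, IsTwoFactorOfDelete H F y ∧ RightGood F x y ∧ ¬ F.Adj x x' := by
  obtain ⟨hnd, hmem, hσ, hc, hd, hx, hx1, hx2⟩ := h
  obtain ⟨hcn, hdn, hdis⟩ := List.nodup_append'.1 hnd
  have hy : y ∉ c ++ d := fun h => (hmem y).2 h rfl
  rw [List.mem_append, not_or] at hy
  have hcyc := isCycleOn_formPerm_mul_left hcn hdis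
  have hcyd : (c.formPerm * d.formPerm).IsCycleOn {a | a ∈ d} := by
    rw [(formPerm_commute hdis).eq]
    exact isCycleOn_formPerm_mul_left hdn hdis.symm
  refine ⟨permGraph (c.formPerm * d.formPerm), isTwoFactorOfDelete_permGraph ?_
    (fun v hv => (hσ v ((hmem v).1 hv)).1) (fun v hv => (hσ v ((hmem v).1 hv)).2),
    ⟨?_, fun v hv hvx => ?_⟩, fun hadj => ?_⟩
  · rw [Equiv.Perm.mul_apply, List.formPerm_apply_of_notMem hy.2,
      List.formPerm_apply_of_notMem hy.1]
  · rwa [component_eq hcyc hx, ncard_list hcn]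
  · rcases List.mem_append.1 ((hmem v).1 hv) with hvc | hvd
    · exact absurd ((component_eq hcyc hx).ge hvc) hvx
    · rwa [component_eq hcyd hvd, ncard_list hdn]
  · exact (permGraph_adj.1 hadj).2.elim hx1 hx2

end Lists

/-! ### The Flower snark `J_5` -/

section Snark

instance : DecidableRel (flowerRel 5) := fun a b => by
  unfold flowerRel
  infer_instance

instance : DecidableRel (flowerSnark 5).Adj := fun a b =>
  decidable_of_iff (a ≠ b ∧ (flowerRel 5 a b ∨ flowerRel 5 b a))
    (SimpleGraph.fromRel_adj _ _ _).symm

/-- The vertex `x_i` of `J_5`. -/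
abbrev vx (i : ZMod 5) : FlowerVert 5 := (0, i)

/-- The vertex `y_i` of `J_5`. -/
abbrev vy (i : ZMod 5) : FlowerVert 5 := (1, i)

/-- The vertex `z_i` of `J_5`. -/
abbrev vz (i : ZMod 5) : FlowerVert 5 := (2, i)

/-- The vertex `w_i` of `J_5`. -/
abbrev vw (i : ZMod 5) : FlowerVert 5 := (3, i)

lemma neighbor_y (i : ZMod 5) (v : FlowerVert 5) (h : (flowerSnark 5).Adj (1, i) v) :
    v = (0, i) ∨ v = (2, i) ∨ v = (3, i) := by
  revert i v
  decide +kernel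

end Snark

/-- For each ordered pair `(x, y) ∈ {(y₂, x₀), (y₀, y₁), (y₀, y₂), (y₀, z₂), (y₀, w₂)}`
of vertices of the Flower snark `J_5` and every neighbor `x'` of `x`, the graph `J_5 − y`
has a right-good 2-factor with respect to `x` not containing the edge `xx'`
(i.e. `(J_5)_{x,y}` is fully-right for these pairs). -/
theorem flowerSnark_five_fully_right (x y : FlowerVert 5)
    (hpair : (x, y) = (((1 : Fin 4), (2 : ZMod 5)), ((0 : Fin 4), (0 : ZMod 5))) ∨
             (x, y) = (((1 : Fin 4), (0 : ZMod 5)), ((1 : Fin 4), (1 : ZMod 5))) ∨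
             (x, y) = (((1 : Fin 4), (0 : ZMod 5)), ((1 : Fin 4), (2 : ZMod 5))) ∨
             (x, y) = (((1 : Fin 4), (0 : ZMod 5)), ((2 : Fin 4), (2 : ZMod 5))) ∨
             (x, y) = (((1 : Fin 4), (0 : ZMod 5)), ((3 : Fin 4), (2 : ZMod 5))))
    (x' : FlowerVert 5) (hx' : (flowerSnark 5).Adj x x') :
    ∃ F : SimpleGraph (FlowerVert 5),
      IsTwoFactorOfDelete (flowerSnark 5) F y ∧ RightGood F x y ∧ ¬ F.Adj x x' := by
  have hsplit : ∀ {a b : FlowerVert 5}, (x, y) = (a, b) → x = a ∧ y = b := Prod.mk.inj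
  rcases hpair with h | h | h | h | h <;> obtain ⟨rfl, rfl⟩ := hsplit h
  · rcases neighbor_y _ _ hx' with rfl | rfl | rfl
    · exact exists_of_certificate
        [vy 2, vz 2, vw 1, vy 1, vx 1, vx 2, vx 3, vx 4, vy 4, vz 4,
         vw 3, vy 3, vz 3, vw 4, vz 0, vy 0, vw 0, vz 1, vw 2]
        [] (by decide +kernel)
    · exact exists_of_certificate
        [vy 2, vx 2, vx 1, vy 1, vw 1, vz 2, vw 3, vz 4, vy 4, vx 4,
         vx 3, vy 3, vz 3, vw 4, vz 0, vy 0, vw 0, vz 1, vw 2]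
        [] (by decide +kernel)
    · exact exists_of_certificate
        [vy 2, vx 2, vx 1, vy 1, vz 1, vw 2, vz 3, vw 4, vy 4, vx 4,
         vx 3, vy 3, vw 3, vz 4, vw 0, vy 0, vz 0, vw 1, vz 2]
        [] (by decide +kernel)
  · rcases neighbor_y _ _ hx' with rfl | rfl | rfl
    · exact exists_of_certificate
        [vy 0, vz 0, vw 1, vz 2, vw 3, vz 4, vy 4, vw 4, vz 3, vy 3,
         vx 3, vx 4, vx 0, vx 1, vx 2, vy 2, vw 2, vz 1, vw 0]
        [] (by decide +kernel)
    · exact exists_of_certificate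
        [vy 0, vx 0, vx 1, vx 2, vx 3, vx 4, vy 4, vz 4, vw 3, vy 3,
         vz 3, vw 4, vz 0, vw 1, vz 2, vy 2, vw 2, vz 1, vw 0]
        [] (by decide +kernel)
    · exact exists_of_certificate
        [vy 0, vx 0, vx 1, vx 2, vx 3, vx 4, vy 4, vw 4, vz 3, vy 3,
         vw 3, vz 4, vw 0, vz 1, vw 2, vy 2, vz 2, vw 1, vz 0]
        [] (by decide +kernel)
  · rcases neighbor_y _ _ hx' with rfl | rfl | rfl
    · exact exists_of_certificate
        [vy 0, vz 0, vw 4, vy 4, vx 4, vx 0, vx 1, vx 2, vx 3, vy 3,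
         vz 3, vw 2, vz 1, vy 1, vw 1, vz 2, vw 3, vz 4, vw 0]
        [] (by decide +kernel)
    · exact exists_of_certificate
        [vy 0, vx 0, vx 4, vx 3, vx 2, vx 1, vy 1, vz 1, vw 2, vz 3,
         vy 3, vw 3, vz 2, vw 1, vz 0, vw 4, vy 4, vz 4, vw 0]
        [] (by decide +kernel)
    · exact exists_of_certificate
        [vy 0, vx 0, vx 4, vx 3, vx 2, vx 1, vy 1, vw 1, vz 2, vw 3,
         vy 3, vz 3, vw 2, vz 1, vw 0, vz 4, vy 4, vw 4, vz 0]
        [] (by decide +kernel)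
  · rcases neighbor_y _ _ hx' with rfl | rfl | rfl
    · exact exists_of_certificate
        [vy 0, vz 0, vw 1, vy 1, vx 1, vx 0, vx 4, vx 3, vx 2, vy 2,
         vw 2, vz 1, vw 0]
        [vy 3, vz 3, vw 4, vy 4, vz 4, vw 3] (by decide +kernel)
    · exact exists_of_certificate
        [vy 0, vx 0, vx 1, vy 1, vw 1, vz 0, vw 4, vz 3, vy 3, vw 3,
         vz 4, vy 4, vx 4, vx 3, vx 2, vy 2, vw 2, vz 1, vw 0]
        [] (by decide +kernel)
    · exact exists_of_certificate
        [vy 0, vx 0, vx 1, vx 2, vy 2, vw 2, vz 3, vw 4, vy 4, vx 4,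
         vx 3, vy 3, vw 3, vz 4, vw 0, vz 1, vy 1, vw 1, vz 0]
        [] (by decide +kernel)
  · rcases neighbor_y _ _ hx' with rfl | rfl | rfl
    · exact exists_of_certificate
        [vy 0, vz 0, vw 1, vz 2, vy 2, vx 2, vx 3, vx 4, vx 0, vx 1,
         vy 1, vz 1, vw 0]
        [vy 3, vz 3, vw 4, vy 4, vz 4, vw 3] (by decide +kernel)
    · exact exists_of_certificate
        [vy 0, vx 0, vx 1, vx 2, vy 2, vz 2, vw 3, vz 4, vy 4, vx 4,
         vx 3, vy 3, vz 3, vw 4, vz 0, vw 1, vy 1, vz 1, vw 0]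
        [] (by decide +kernel)
    · exact exists_of_certificate
        [vy 0, vx 0, vx 1, vy 1, vz 1, vw 0, vz 4, vw 3, vy 3, vz 3,
         vw 4, vy 4, vx 4, vx 3, vx 2, vy 2, vz 2, vw 1, vz 0]
        [] (by decide +kernel)
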